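/- arXiv:1502.06909 — 3 statements merged into one kernel-verified Lean document; each statement's English description precedes it below -/
import Mathlib

section
/- Let m > 2 and q > 0 be integers. Then for any prime p > m*q, the rational number ∑_{k=q-1}^{p-1} C(k, q-1)^m * (∑_{l=0}^{q-2} 1/(k-l)^2) has p-adic valuation at least 1; that is, ∑_{k=q-1}^{p-1} C(k, q-1)^m * ∑_{l=0}^{q-2} 1/(k-l)^2 ≡ 0 (mod p). -/
/-!
Put `n = q - 1`. Since `n! * C(k, n) = ∏_{j < n} (k - j)`, multiplying the sum by `(n!)^m`, a unit
at `p` because `n < p`, turns the summand into the value at `k` of the integer polynomial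
`∑_{l < n} (∏_{j < n} (X - j))^(m - 2) * (∏_{j < n, j ≠ l} (X - j))^2`.
As `m > 2`, this polynomial vanishes at `0, …, n - 1`, so the sum may be extended to
`0 ≤ k ≤ p - 1`, a complete residue system mod `p`. The degree is at most `m * n < p - 1`, and a
polynomial of degree less than `p - 1` sums to `0` over `ZMod p` because the corresponding power
sums vanish (`FiniteField.sum_pow_lt_card_sub_one`).
-/

open Polynomial in
theorem sum_eval_eq_zero_of_natDegree_lt {p : ℕ} [Fact p.Prime] (F : (ZMod p)[X])
    (hF : F.natDegree < p - 1) : ∑ x : ZMod p, F.eval x = 0 := by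
  simp_rw [eval_eq_sum_range]
  rw [Finset.sum_comm]
  refine Finset.sum_eq_zero fun i hi => ?_
  rw [← Finset.mul_sum, FiniteField.sum_pow_lt_card_sub_one, mul_zero]
  rw [ZMod.card]
  have := Finset.mem_range.1 hi
  omega

theorem sum_range_natCast_zmod {p : ℕ} [Fact p.Prime] (g : ZMod p → ZMod p) :
    ∑ k ∈ Finset.range p, g (k : ZMod p) = ∑ x : ZMod p, g x := by
  refine Finset.sum_bij' (fun k _ => (k : ZMod p)) (fun x _ => x.val) ?_ ?_ ?_ ?_ ?_
  · simp
  · intro x _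
    simpa using ZMod.val_lt x
  · intro k hk
    exact ZMod.val_cast_of_lt (Finset.mem_range.1 hk)
  · intro x _
    simp
  · simp

/-- The product `(∏_{j < n} (x - j))^(m - 2) * (∏_{j < n, j ≠ l} (x - j))^2`. For `m ≥ 2` and
`l < n` it is `(∏_{j < n} (x - j))^m / (x - l)^2` with the denominator cancelled, so it makes sense
in any commutative ring and at `x = l`. -/
def clearedTerm {R : Type*} [CommRing R] (m n l : ℕ) (x : R) : R :=
  (∏ j ∈ Finset.range n, (x - (j : R))) ^ (m - 2) *
    (∏ j ∈ (Finset.range n).erase l, (x - (j : R))) ^ 2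

theorem map_clearedTerm {R S : Type*} [CommRing R] [CommRing S] (f : R →+* S) (m n l : ℕ) (x : R) :
    f (clearedTerm m n l x) = clearedTerm m n l (f x) := by
  simp [clearedTerm, map_prod]

open Polynomial in
theorem natDegree_clearedTerm_le {R : Type*} [CommRing R] [Nontrivial R] {m : ℕ} (hm : 2 < m)
    (n l : ℕ) : (clearedTerm m n l (X : R[X])).natDegree ≤ m * n := by
  have key : ∀ s : Finset ℕ, (∏ j ∈ s, ((X : R[X]) - (j : R[X]))).natDegree ≤ s.card := by
    intro s
    refine (natDegree_prod_le _ _).trans ?_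
    rw [Finset.card_eq_sum_ones]
    refine Finset.sum_le_sum fun j _ => ?_
    rw [← C_eq_natCast]
    exact (natDegree_X_sub_C _).le
  have h1 := key (Finset.range n)
  have h2 := (key ((Finset.range n).erase l)).trans (Finset.card_erase_le)
  rw [Finset.card_range] at h1 h2
  unfold clearedTerm
  refine (natDegree_mul_le_of_le (natDegree_pow_le_of_le (m - 2) h1)
    (natDegree_pow_le_of_le 2 h2)).trans ?_
  rw [← add_mul]
  exact Nat.mul_le_mul_right _ (by omega)

open Polynomial in
theorem dvd_sum_clearedTerm {p m n : ℕ} (hp : p.Prime) (hm : 2 < m) (h : m * n < p - 1) :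
    (p : ℤ) ∣ ∑ k ∈ Finset.range p, ∑ l ∈ Finset.range n, clearedTerm m n l (k : ℤ) := by
  haveI : Fact p.Prime := ⟨hp⟩
  rw [← ZMod.intCast_zmod_eq_zero_iff_dvd]
  have hmap : ∀ (k l : ℕ), ((clearedTerm m n l (k : ℤ) : ℤ) : ZMod p) =
      (clearedTerm m n l (X : (ZMod p)[X])).eval (k : ZMod p) := by
    intro k l
    have h1 := map_clearedTerm (Int.castRingHom (ZMod p)) m n l (k : ℤ)
    have h2 := map_clearedTerm (evalRingHom (k : ZMod p)) m n l X
    simp only [eq_intCast, Int.cast_natCast, coe_evalRingHom, eval_X] at h1 h2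
    rw [h1, h2]
  push_cast
  simp_rw [hmap]
  rw [Finset.sum_comm]
  refine Finset.sum_eq_zero fun l _ => ?_
  rw [sum_range_natCast_zmod fun x => (clearedTerm m n l (X : (ZMod p)[X])).eval x]
  exact sum_eval_eq_zero_of_natDegree_lt _ ((natDegree_clearedTerm_le hm n l).trans_lt h)

theorem clearedTerm_eq_zero {m n k : ℕ} (hm : 2 < m) (l : ℕ) (hk : k < n) :
    clearedTerm m n l (k : ℤ) = 0 := by
  unfold clearedTerm
  rw [Finset.prod_eq_zero (Finset.mem_range.2 hk) (sub_self _), zero_pow (by omega), zero_mul]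

theorem clearedTerm_eq_factorial_mul {m n k l : ℕ} (hm : 2 < m) (hl : l < n) (hk : n ≤ k) :
    ((clearedTerm m n l (k : ℤ) : ℤ) : ℚ) =
      (n.factorial : ℚ) ^ m * ((k.choose n : ℚ) ^ m * (1 / ((k : ℚ) - (l : ℚ)) ^ 2)) := by
  have h1 := map_clearedTerm (Int.castRingHom ℚ) m n l (k : ℤ)
  simp only [eq_intCast, Int.cast_natCast] at h1
  have hkl : (k : ℚ) - (l : ℚ) ≠ 0 := by
    rw [sub_ne_zero]
    exact_mod_cast (by omega : k ≠ l)
  have hP : (n.factorial : ℚ) * (k.choose n : ℚ) = ∏ j ∈ Finset.range n, ((k : ℚ) - (j : ℚ)) := by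
    rw [← Nat.cast_mul, ← Nat.descFactorial_eq_factorial_mul_choose,
      Nat.descFactorial_eq_prod_range, Nat.cast_prod]
    refine Finset.prod_congr rfl fun j hj => ?_
    have := Finset.mem_range.1 hj
    exact Nat.cast_sub (by omega)
  have hE := Finset.mul_prod_erase (Finset.range n) (fun j : ℕ => (k : ℚ) - (j : ℚ))
    (Finset.mem_range.2 hl)
  obtain ⟨r, rfl⟩ : ∃ r, m = r + 2 := ⟨m - 2, by omega⟩
  rw [h1, ← mul_assoc, ← mul_pow, hP, clearedTerm, Nat.add_sub_cancel, pow_add]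
  nth_rewrite 3 [← hE]
  field_simp

theorem stmt6 (m q : ℕ) (hm : 2 < m) (hq : 0 < q) (p : ℕ) (hp : p.Prime)
    (hpmq : m * q < p) :
    padicNorm p (∑ k ∈ Finset.Icc (q - 1) (p - 1),
        (k.choose (q - 1) : ℚ) ^ m * ∑ l ∈ Finset.range (q - 1), 1 / ((k : ℚ) - (l : ℚ)) ^ 2)
      ≤ (p : ℚ) ^ (-(1 : ℤ)) := by
  haveI : Fact p.Prime := ⟨hp⟩
  obtain ⟨n, rfl⟩ : ∃ n, q = n + 1 := ⟨q - 1, by omega⟩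
  rw [Nat.add_sub_cancel]
  have hmn : m * n < p - 1 := by
    rw [mul_add] at hpmq
    omega
  have hn : n < p := by nlinarith
  set S : ℚ := ∑ k ∈ Finset.Icc n (p - 1),
    (k.choose n : ℚ) ^ m * ∑ l ∈ Finset.range n, 1 / ((k : ℚ) - (l : ℚ)) ^ 2 with hS
  have hsum : (n.factorial : ℚ) ^ m * S =
      ((∑ k ∈ Finset.range p, ∑ l ∈ Finset.range n, clearedTerm m n l (k : ℤ) : ℤ) : ℚ) := by
    have hsub : Finset.Icc n (p - 1) ⊆ Finset.range p := by
      intro k hk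
      have := Finset.mem_Icc.1 hk
      exact Finset.mem_range.2 (by omega)
    rw [← Finset.sum_subset hsub, hS, Finset.mul_sum, Int.cast_sum]
    · refine Finset.sum_congr rfl fun k hk => ?_
      rw [Int.cast_sum, Finset.mul_sum, Finset.mul_sum]
      refine Finset.sum_congr rfl fun l hl => ?_
      exact (clearedTerm_eq_factorial_mul hm (Finset.mem_range.1 hl) (Finset.mem_Icc.1 hk).1).symm
    · intro k hk hk'
      rw [Finset.mem_range] at hk
      rw [Finset.mem_Icc] at hk'
      exact Finset.sum_eq_zero fun l _ => clearedTerm_eq_zero hm l (by omega)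
  have hunit : padicNorm p ((n.factorial : ℚ) ^ m) = 1 := by
    rw [← Nat.cast_pow, padicNorm.nat_eq_one_iff]
    intro hd
    exact absurd ((hp.dvd_factorial).1 (hp.dvd_of_dvd_pow hd)) (by omega)
  have hdvd := dvd_sum_clearedTerm hp hm hmn
  rw [← one_mul (padicNorm p S), ← hunit, ← padicNorm.mul, hsum]
  exact (padicNorm.dvd_iff_norm_le (n := 1)).1 (by simpa using hdvd)
end

section
/- Let m > 2 and q > 0 be integers, let p > m*q be a prime, and let k be an integer with 1 ≤ k ≤ p - 1. Then (-1)^{k*m} * C(p/m - q, k)^m - C(k+q-1, k)^{m-1} * (-1)^k * C(p - q, k) ≡ p^2 * ((m-1)/(2m)) * C(k+q-1, q-1)^m * ∑_{j=1}^{k} 1/(j+q-1)^2 (mod p^3); that is, the p-adic valuation of the difference of the two sides is at least 3. -/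
/-!
Put `a_j = q + j` for `0 ≤ j < k` and `C = C(k+q-1, k) = ∏ a_j / (j+1)`. Pulling the signs and the
`a_j` out of the defining products gives `(-1)^k C(p/m - q, k) = C ∏ (1 - (p/m)/a_j)` and
`(-1)^k C(p - q, k) = C ∏ (1 - p/a_j)`, so the difference in question is
`C^m (∏ (1 - (p/m)/a_j)^m - ∏ (1 - p/a_j))`.

If `p` divides no `a_j`, everything is `p`-integral, and the binomial expansion to second order
(`pow_one_sub_dvd`) says that the `j`-th factors differ by `p² (m-1)/(2m) / a_j²` modulo `p³`.
As all factors are `1` modulo `p`, these differences simply add up (`prod_sub_prod_dvd`).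

Otherwise `a_j = p` for one index `j`. Then `C(p - q, k) = 0`, while `C(p/m - q, k)` and `C` are
multiples of `p`, so their `m`-th powers are multiples of `p³`; and `p² / a_j²` is `p`-integral for
every `j`.

Both cases are carried out in the subring `pInt p` of `p`-integral rationals.
-/

/-- Generalized binomial coefficient `C(α, k) = ∏_{j=1}^{k} (α - j + 1)/j`. -/
def ratChoose (α : ℚ) (k : ℕ) : ℚ := ∏ j ∈ Finset.range k, (α - j) / (j + 1)

/-- The ring of `p`-integral rational numbers, i.e. the localization of `ℤ` at `p` inside `ℚ`. -/
def pInt (p : ℕ) [Fact p.Prime] : Subring ℚ where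
  carrier := {x | padicNorm p x ≤ 1}
  mul_mem' {a b} ha hb := by
    simp only [Set.mem_ofPred_eq, padicNorm.mul] at *
    exact mul_le_one₀ ha (padicNorm.nonneg _) hb
  one_mem' := by simp
  add_mem' {a b} ha hb := (padicNorm.nonarchimedean).trans (max_le ha hb)
  zero_mem' := by simp
  neg_mem' {a} ha := by simpa [padicNorm.neg] using ha

lemma inv_mem_pInt (p : ℕ) [Fact p.Prime] (n : ℕ) (h : ¬ p ∣ n) : (n : ℚ)⁻¹ ∈ pInt p := by
  change padicNorm p _ ≤ 1
  have h1 : padicNorm p (n : ℚ) = 1 := (padicNorm.nat_eq_one_iff n).2 h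
  rw [← one_div, padicNorm.div, h1]
  simp

lemma norm_le_of_eq (p : ℕ) [Fact p.Prime] (x r : ℚ) (hr : r ∈ pInt p) (h : x = p ^ 3 * r) :
    padicNorm p x ≤ (p : ℚ) ^ (-(3 : ℤ)) := by
  have hr' : padicNorm p r ≤ 1 := hr
  have hp : 1 < p := (Fact.out : p.Prime).one_lt
  have h3 : padicNorm p ((p : ℚ) ^ 3) = (p : ℚ) ^ (-(3 : ℤ)) := by
    simp only [pow_succ, pow_zero, one_mul, padicNorm.mul, padicNorm.padicNorm_p hp]
    rw [zpow_neg, ← mul_inv, ← mul_inv]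
    congr 1
    norm_cast
    ring
  rw [h, padicNorm.mul, h3]
  exact mul_le_of_le_one_right (by positivity) hr'

lemma pow_one_sub_dvd {R : Type*} [CommRing R] (y : R) (m : ℕ) :
    y ^ 3 ∣ (1 - y) ^ m - (1 - m * y + (m.choose 2 : ℕ) * y ^ 2) := by
  induction m with
  | zero => simp
  | succ n ih =>
    obtain ⟨c, hc⟩ := ih
    refine ⟨c * (1 - y) - (n.choose 2 : ℕ), ?_⟩
    have h : ((n + 1).choose 2 : ℕ) = n + n.choose 2 := by
      rw [Nat.choose_succ_succ' n 1, Nat.choose_one_right]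
    rw [h, pow_succ, sub_eq_iff_eq_add.1 hc]
    push_cast
    ring

/-- If `F j ≡ G j + t² c j (mod t³)` and `G j ≡ 1 (mod t)` for all `j`, then
`∏ F ≡ ∏ G + t² ∑ c (mod t³)`. -/
lemma prod_sub_prod_dvd {R : Type*} [CommRing R] (t : R) (F G c : ℕ → R)
    (hF : ∀ j, t ^ 3 ∣ F j - (G j + t ^ 2 * c j)) (hG : ∀ j, t ∣ G j - 1) (k : ℕ) :
    t ^ 3 ∣ ∏ j ∈ Finset.range k, F j -
      (∏ j ∈ Finset.range k, G j + t ^ 2 * ∑ j ∈ Finset.range k, c j) := by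
  -- the product of the `G j` is `1` modulo `t`, which the induction step also uses
  suffices h : t ∣ ∏ j ∈ Finset.range k, G j - 1 ∧ t ^ 3 ∣ ∏ j ∈ Finset.range k, F j -
      (∏ j ∈ Finset.range k, G j + t ^ 2 * ∑ j ∈ Finset.range k, c j) from h.2
  induction k with
  | zero => simp
  | succ n ih =>
    obtain ⟨⟨g, hg⟩, ⟨f, hf⟩⟩ := ih
    obtain ⟨f', hf'⟩ := hF n
    obtain ⟨g', hg'⟩ := hG n
    simp only [Finset.prod_range_succ, Finset.sum_range_succ]
    rw [sub_eq_iff_eq_add] at hg hf hf' hg'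
    rw [hf, hf', hg, hg']
    generalize ∑ j ∈ Finset.range n, c j = s
    refine ⟨⟨t * g * g' + g + g', by ring⟩,
      ⟨f * (t ^ 3 * f' + (t * g' + 1 + t ^ 2 * c n)) + (t * g + 1 + t ^ 2 * s) * f'
        + g * c n + s * g' + t * s * c n, by ring⟩⟩

lemma choose_eq_prod (q k : ℕ) (hq : 0 < q) :
    ((k + q - 1).choose k : ℚ) = ∏ j ∈ Finset.range k, ((q : ℚ) + j) / (j + 1) := by
  obtain ⟨r, rfl⟩ : ∃ r, q = r + 1 := ⟨q - 1, by omega⟩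
  induction k with
  | zero => simp
  | succ n ih =>
    rw [Finset.prod_range_succ, ← ih]
    have h := Nat.add_one_mul_choose_eq (n + r) n
    have e1 : n + 1 + (r + 1) - 1 = n + r + 1 := by omega
    have e2 : n + (r + 1) - 1 = n + r := by omega
    rw [e1, e2]
    have h' : ((n : ℚ) + r + 1) * ((n + r).choose n : ℚ)
        = ((n + r + 1).choose (n + 1) : ℚ) * (n + 1) := by exact_mod_cast h
    have : (n : ℚ) + 1 ≠ 0 := by positivity
    field_simp
    push_cast
    linarith

lemma ratChoose_eq (q k : ℕ) (hq : 0 < q) (x : ℚ) :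
    ratChoose (x - q) k = (-1) ^ k * ((k + q - 1).choose k : ℚ) *
      ∏ j ∈ Finset.range k, (1 - x * ((q : ℚ) + j)⁻¹) := by
  rw [choose_eq_prod q k hq, ratChoose]
  have : ((-1 : ℚ)) ^ k = ∏ j ∈ Finset.range k, (-1 : ℚ) := by simp
  rw [this, ← Finset.prod_mul_distrib, ← Finset.prod_mul_distrib]
  refine Finset.prod_congr rfl fun j _ => ?_
  have h1 : (q : ℚ) + j ≠ 0 := by positivity
  field_simp
  ring

/-- A product with `p`-integral factors, one of which is a multiple of `p`, is a multiple of `p`. -/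
lemma prod_mem_of_factor (p : ℕ) [Fact p.Prime] (k j₀ : ℕ) (hj₀ : j₀ < k) (f : ℕ → ℚ)
    (hf : ∀ j < k, f j ∈ pInt p) (s : ℚ) (hs : s ∈ pInt p) (h : f j₀ = p * s) :
    ∃ r ∈ pInt p, ∏ j ∈ Finset.range k, f j = p * r := by
  refine ⟨s * ∏ j ∈ (Finset.range k).erase j₀, f j, mul_mem hs (prod_mem fun j hj => hf j ?_), ?_⟩
  · exact Finset.mem_range.1 (Finset.mem_of_mem_erase hj)
  · rw [← Finset.mul_prod_erase _ _ (Finset.mem_range.2 hj₀), h, mul_assoc]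

theorem stmt9 (m q : ℕ) (hm : 2 < m) (hq : 0 < q) (p : ℕ) (hp : p.Prime)
    (hpmq : m * q < p) (k : ℕ) (hk1 : 1 ≤ k) (hk2 : k ≤ p - 1) :
    padicNorm p (((-1 : ℚ) ^ (k * m) * ratChoose ((p : ℚ) / m - q) k ^ m
          - ((k + q - 1).choose k : ℚ) ^ (m - 1) * (-1) ^ k * ratChoose ((p : ℚ) - q) k)
        - (p : ℚ) ^ 2 * (((m : ℚ) - 1) / (2 * m)) * ((k + q - 1).choose (q - 1) : ℚ) ^ m
            * ∑ j ∈ Finset.Icc 1 k, 1 / ((j : ℚ) + q - 1) ^ 2)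
      ≤ (p : ℚ) ^ (-(3 : ℤ)) := by
  have : Fact p.Prime := ⟨hp⟩
  have hmp : m < p := lt_of_le_of_lt (Nat.le_mul_of_pos_right m hq) hpmq
  have hqp : 3 * q < p := lt_of_le_of_lt (Nat.mul_le_mul_right q hm) hpmq
  have hm0 : (m : ℚ) ≠ 0 := by positivity
  have hminv : (m : ℚ)⁻¹ ∈ pInt p :=
    inv_mem_pInt p m fun h => absurd (Nat.le_of_dvd (by omega) h) (by omega)
  have h2inv : ((2 : ℕ) : ℚ)⁻¹ ∈ pInt p :=
    inv_mem_pInt p 2 fun h => absurd (Nat.le_of_dvd (by omega) h) (by omega)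
  have hpm : (p : ℚ) ∈ pInt p := natCast_mem _ _
  have hsum : ∑ j ∈ Finset.Icc 1 k, 1 / ((j : ℚ) + q - 1) ^ 2
      = ∑ j ∈ Finset.range k, (((q : ℚ) + j)⁻¹) ^ 2 := by
    rw [Finset.range_eq_Ico, ← Finset.sum_Ico_add_right_sub_eq 0 k 1]
    refine Finset.sum_congr (by ext; simp) fun j hj => ?_
    have : 1 ≤ j := by simp at hj; omega
    push_cast [Nat.cast_sub this]
    rw [one_div, inv_pow]
    congr 2
    ring
  have hsymm : (k + q - 1).choose (q - 1) = (k + q - 1).choose k :=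
    Nat.choose_symm_of_eq_add (by omega)
  rw [hsymm, hsum]
  by_cases hcase : k + q - 1 < p
  · have hb : ∀ j, ∃ b : pInt p, j < k → (b : ℚ) = ((q : ℚ) + j)⁻¹ := fun j => by
      by_cases hj : j < k
      · refine ⟨⟨((q + j : ℕ) : ℚ)⁻¹, inv_mem_pInt p _ fun h =>
          absurd (Nat.le_of_dvd (by omega) h) (by omega)⟩, fun _ => by push_cast; rfl⟩
      · exact ⟨0, fun h => absurd h hj⟩
    choose b hb using hb
    let e : pInt p := ⟨(m : ℚ)⁻¹, hminv⟩
    have he : (m : pInt p) * e = 1 := Subtype.ext (by simp [e, hm0])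
    obtain ⟨r, hr⟩ := prod_sub_prod_dvd (p : pInt p) (fun j => (1 - p * e * b j) ^ m)
      (fun j => 1 - p * b j) (fun j => (m.choose 2 : ℕ) * (e * b j) ^ 2)
      (fun j => by
        obtain ⟨c, hc⟩ := pow_one_sub_dvd ((p : pInt p) * e * b j) m
        refine ⟨(e * b j) ^ 3 * c, ?_⟩
        have h1 : (m : pInt p) * (p * e * b j) = p * b j := by linear_combination p * b j * he
        rw [h1] at hc
        linear_combination hc)
      (fun j => ⟨- b j, by ring⟩) k
    have hr' := congrArg (Subtype.val) hr
    push_cast at hr'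
    have hP1 : ∏ j ∈ Finset.range k, (1 - (p : ℚ) * (e : ℚ) * (b j : ℚ)) ^ m
        = (∏ j ∈ Finset.range k, (1 - (p : ℚ) / m * ((q : ℚ) + j)⁻¹)) ^ m := by
      rw [← Finset.prod_pow]
      refine Finset.prod_congr rfl fun j hj => ?_
      rw [hb j (Finset.mem_range.1 hj), div_eq_mul_inv]
    have hP2 : ∏ j ∈ Finset.range k, (1 - (p : ℚ) * (b j : ℚ))
        = ∏ j ∈ Finset.range k, (1 - (p : ℚ) * ((q : ℚ) + j)⁻¹) :=
      Finset.prod_congr rfl fun j hj => by rw [hb j (Finset.mem_range.1 hj)]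
    have hP3 : ∑ j ∈ Finset.range k, (m.choose 2 : ℚ) * ((e : ℚ) * (b j : ℚ)) ^ 2
        = ((m : ℚ) - 1) / (2 * m) * ∑ j ∈ Finset.range k, (((q : ℚ) + j)⁻¹) ^ 2 := by
      rw [Finset.mul_sum]
      refine Finset.sum_congr rfl fun j hj => ?_
      rw [hb j (Finset.mem_range.1 hj), Nat.cast_choose_two, mul_pow, ← mul_assoc]
      congr 1
      simp only [e]
      field_simp
    rw [hP1, hP2, hP3] at hr'
    refine norm_le_of_eq p _ (((k + q - 1).choose k : ℚ) ^ m * r)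
      (mul_mem (pow_mem (natCast_mem _ _) _) r.2) ?_
    rw [ratChoose_eq q k hq, ratChoose_eq q k hq, mul_pow, mul_pow, ← pow_mul]
    have hs1 : ((-1 : ℚ)) ^ (k * m) * (-1) ^ (k * m) = 1 := by
      rw [← mul_pow]; simp
    have hs2 : ((-1 : ℚ)) ^ k * (-1) ^ k = 1 := by
      rw [← mul_pow]; simp
    have hC : ((k + q - 1).choose k : ℚ) ^ (m - 1) * ((k + q - 1).choose k : ℚ)
        = ((k + q - 1).choose k : ℚ) ^ m := pow_sub_one_mul (by omega) _
    generalize ((k + q - 1).choose k : ℚ) ^ m = D at *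
    generalize ((k + q - 1).choose k : ℚ) ^ (m - 1) = D' at *
    generalize ((k + q - 1).choose k : ℚ) = C at *
    generalize ((-1 : ℚ)) ^ (k * m) = s at *
    generalize ((-1 : ℚ)) ^ k = s' at *
    generalize (∏ j ∈ Finset.range k, (1 - (p : ℚ) / m * ((q : ℚ) + j)⁻¹)) ^ m = A at *
    generalize (∏ j ∈ Finset.range k, (1 - (p : ℚ) * ((q : ℚ) + j)⁻¹)) = B at *
    linear_combination D * hr' + D * A * hs1 - D' * C * B * hs2 - B * hC
  · -- here `q + (p - q) = p` is one of the `a_j`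
    have hj₀ : p - q < k := by omega
    have hcast : ((p - q : ℕ) : ℚ) = p - q := Nat.cast_sub (by omega)
    have hden : ∀ j < k, ((j : ℚ) + 1)⁻¹ ∈ pInt p := fun j hj => by
      have := inv_mem_pInt p (j + 1) fun h => absurd (Nat.le_of_dvd (by omega) h) (by omega)
      push_cast at this
      exact this
    have hz : ratChoose ((p : ℚ) - q) k = 0 :=
      Finset.prod_eq_zero (Finset.mem_range.2 hj₀) (by rw [hcast]; simp)
    obtain ⟨r₁, hr₁, h₁⟩ : ∃ r ∈ pInt p, ratChoose ((p : ℚ) / m - q) k = p * r := by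
      refine prod_mem_of_factor p k (p - q) hj₀ _ (fun j hj => ?_)
        (((m : ℚ)⁻¹ - 1) * (((p - q : ℕ) : ℚ) + 1)⁻¹)
        (mul_mem (sub_mem hminv (one_mem _)) (hden _ hj₀)) ?_
      · rw [div_eq_mul_inv, div_eq_mul_inv]
        exact mul_mem (sub_mem (sub_mem (mul_mem hpm hminv) (natCast_mem _ _))
          (natCast_mem _ _)) (hden j hj)
      · rw [div_eq_mul_inv, div_eq_mul_inv, hcast]
        ring
    obtain ⟨r₂, hr₂, h₂⟩ : ∃ r ∈ pInt p, ((k + q - 1).choose k : ℚ) = p * r := by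
      rw [choose_eq_prod q k hq]
      refine prod_mem_of_factor p k (p - q) hj₀ _ (fun j hj => ?_) ((((p - q : ℕ) : ℚ) + 1)⁻¹)
        (hden _ hj₀) ?_
      · rw [div_eq_mul_inv]
        exact mul_mem (add_mem (natCast_mem _ _) (natCast_mem _ _)) (hden j hj)
      · rw [div_eq_mul_inv, hcast]
        ring
    have hS : (p : ℚ) ^ 2 * ∑ j ∈ Finset.range k, (((q : ℚ) + j)⁻¹) ^ 2 ∈ pInt p := by
      rw [Finset.mul_sum]
      refine sum_mem fun j hj => ?_
      rw [← mul_pow]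
      refine pow_mem ?_ 2
      have hj' := Finset.mem_range.1 hj
      by_cases hd : p ∣ q + j
      · -- `q + j < 2p`, so the only multiple of `p` available is `p` itself
        obtain ⟨c, hc⟩ := hd
        have hc1 : c = 1 := by
          have h1 : c < 2 := by
            by_contra! h
            have := Nat.mul_le_mul_left p h
            omega
          have h2 : c ≠ 0 := by rintro rfl; omega
          omega
        have : (q : ℚ) + j = p := by
          rw [hc1, mul_one] at hc
          exact_mod_cast hc
        rw [this, mul_inv_cancel₀ (by exact_mod_cast hp.ne_zero)]
        exact one_mem _
      · have := inv_mem_pInt p _ hd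
        push_cast at this
        exact mul_mem hpm this
    obtain ⟨n, rfl⟩ : ∃ n, m = 3 + n := ⟨m - 3, by omega⟩
    refine norm_le_of_eq p _ ((-1) ^ (k * (3 + n)) * (p ^ n * r₁ ^ (3 + n))
      - (((3 + n : ℕ) : ℚ) - 1) * (((2 : ℕ) : ℚ)⁻¹ * ((3 + n : ℕ) : ℚ)⁻¹) * (p ^ n * r₂ ^ (3 + n))
        * (p ^ 2 * ∑ j ∈ Finset.range k, (((q : ℚ) + j)⁻¹) ^ 2)) ?_ ?_
    · exact sub_mem (mul_mem (pow_mem (neg_mem (one_mem _)) _)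
        (mul_mem (pow_mem hpm _) (pow_mem hr₁ _)))
        (mul_mem (mul_mem (mul_mem (sub_mem (natCast_mem _ _) (one_mem _)) (mul_mem h2inv hminv))
          (mul_mem (pow_mem hpm _) (pow_mem hr₂ _))) hS)
    · rw [hz, h₁, h₂, mul_pow, mul_pow, div_eq_mul_inv, mul_inv, pow_add (p : ℚ) 3 n]
      push_cast
      ring
end

section
/- Let m > 2 and q > 0 be integers with m even or q odd, and let p > m*q be a prime. Then the rational number 2 * ∑_{k=q-1}^{p-1} C(k, q-1)^m * ∑_{j=q}^{k} 1/j^2 has p-adic valuation at least 1; that is, 2 * ∑_{k=q-1}^{p-1} C(k, q-1)^m * ∑_{j=q}^{k} 1/j^2 ≡ 0 (mod p). -/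
/-!
Write `q = r + 1`, `f k = C(k, r) ^ m` and `H n = ∑_{1 ≤ j ≤ n} 1 / j ^ 2`, all read in `ZMod p`. The
inner sum is `H k - H r`. Two facts drive the proof.

* Reflection. `r! * C(k, r) = k (k - 1) ⋯ (k - r + 1)` is multiplied by `(-1) ^ r` when `k` is
  replaced by `r - 1 - k`, so the parity hypothesis gives `f (p - 1 + r - k) = f k`
  (`choose_reflect`). On the other hand `H (p - 1 - n) = H (p - 1) - H n`, because `j ↦ p - j`
  preserves `1 / j ^ 2`. Adding the sum to its reindexing by `k ↦ p - 1 + r - k` on `[r, p - 1]`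
  turns `2 ∑ f k (H k - H r)` into `∑ f k (H k - H (k - r))` plus a constant times `∑ f k`.
* Power sums. A polynomial of degree less than `p - 1` sums to zero over `ZMod p`
  (`sum_range_eval`). This applies to `f`, of degree `m r`, and, since
  `H k - H (k - r) = ∑_{i < r} 1 / (k - i) ^ 2`, to the polynomials `f k / (k - i) ^ 2`. As `m > 2`,
  the latter still vanish at `0, …, r - 1`, so that their sum over `[r, p - 1]` is the full sum.

The passage from `ℚ` to `ZMod p` is made by multiplying by `((p - 1)!) ^ 2`, which is prime to `p` and
clears every denominator.
-/

open Polynomial in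
lemma sum_range_eval {p : ℕ} [Fact p.Prime] (P : (ZMod p)[X]) (hP : P.natDegree < p - 1) :
    ∑ k ∈ Finset.range p, P.eval (k : ZMod p) = 0 := by
  have h1 : ∑ k ∈ Finset.range p, P.eval (k : ZMod p) = ∑ x : ZMod p, P.eval x := by
    refine Finset.sum_bij' (fun k _ => (k : ZMod p)) (fun x _ => x.val) ?_ ?_ ?_ ?_ ?_
    · simp
    · intro x _
      simpa using ZMod.val_lt x
    · intro k hk
      exact ZMod.val_cast_of_lt (by simpa using hk)
    · intro x _
      simp
    · simp
  rw [h1]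
  simp_rw [eval_eq_sum_range]
  rw [Finset.sum_comm]
  refine Finset.sum_eq_zero fun i hi => ?_
  rw [← Finset.mul_sum, FiniteField.sum_pow_lt_card_sub_one, mul_zero]
  rw [ZMod.card]
  have := Finset.mem_range.1 hi
  omega

/-- The falling factorial `r! * C(k, r)` as a product of field elements. For `k < r` both sides
vanish, so the truncated subtraction in `Nat.descFactorial` does no harm. -/
lemma cast_factorial_mul_choose (F : Type*) [Field F] (k r : ℕ) :
    (r.factorial : F) * (k.choose r : F) = ∏ i ∈ Finset.range r, ((k : F) - i) := by
  rw [← Nat.cast_mul, ← Nat.descFactorial_eq_factorial_mul_choose]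
  rcases lt_or_ge k r with h | h
  · rw [Nat.descFactorial_of_lt h, Nat.cast_zero, eq_comm]
    exact Finset.prod_eq_zero (Finset.mem_range.2 h) (sub_self _)
  · rw [Nat.descFactorial_eq_prod_range, Nat.cast_prod]
    refine Finset.prod_congr rfl fun i hi => ?_
    rw [Nat.cast_sub]
    have := Finset.mem_range.1 hi
    omega

lemma factorial_cast_ne_zero {p : ℕ} [hp : Fact p.Prime] {r : ℕ} (hr : r < p) :
    (r.factorial : ZMod p) ≠ 0 := by
  rw [Ne, ZMod.natCast_eq_zero_iff, hp.out.dvd_factorial]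
  omega

lemma choose_reflect {p : ℕ} [hp : Fact p.Prime] {r k : ℕ} (hr : r < p) (hk : k ≤ p - 1) :
    ((p - 1 + r - k).choose r : ZMod p) = (-1) ^ r * (k.choose r : ZMod p) := by
  apply mul_left_cancel₀ (factorial_cast_ne_zero hr)
  rw [mul_left_comm, cast_factorial_mul_choose, cast_factorial_mul_choose,
    ← Finset.prod_range_reflect]
  conv_rhs => rw [← Finset.card_range r, ← Finset.prod_const, Finset.card_range r]
  rw [← Finset.prod_mul_distrib]
  refine Finset.prod_congr rfl fun i hi => ?_
  have hi := Finset.mem_range.1 hi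
  have hp1 := hp.out.one_lt
  rw [Nat.cast_sub (by omega), Nat.cast_sub (by omega), Nat.cast_add, Nat.cast_sub (by omega),
    Nat.cast_sub (by omega)]
  simp
  ring

/-- The harmonic number of order two `∑_{1 ≤ j ≤ n} 1 / j ^ 2` in `ZMod p`; a term with `p ∣ j` is
`0` by the convention `0⁻¹ = 0`. -/
def harm2 (p : ℕ) [Fact p.Prime] (n : ℕ) : ZMod p :=
  ∑ j ∈ Finset.range n, (((j + 1 : ℕ) : ZMod p) ^ 2)⁻¹

section
variable {p : ℕ} [hp : Fact p.Prime]

lemma sum_Icc_eq_harm2 {r k : ℕ} (h : r ≤ k) :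
    ∑ j ∈ Finset.Icc (r + 1) k, ((j : ZMod p) ^ 2)⁻¹ = harm2 p k - harm2 p r := by
  induction k, h using Nat.le_induction with
  | base => simp
  | succ k hk ih =>
    rw [Finset.sum_Icc_succ_top (by omega), ih, harm2, harm2, harm2, Finset.sum_range_succ]
    ring

lemma harm2_reflect {n : ℕ} (h : n ≤ p - 1) :
    harm2 p (p - 1 - n) = harm2 p (p - 1) - harm2 p n := by
  have hp1 := hp.out.one_lt
  induction n with
  | zero => simp [harm2]
  | succ n ih =>
    have ih := ih (by omega)
    obtain ⟨t, ht⟩ : ∃ t, p - 1 - n = t + 1 := ⟨p - 1 - n - 1, by omega⟩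
    have h2 : p - 1 - (n + 1) = t := by omega
    have h3 : ((t + 1 : ℕ) : ZMod p) = -((n + 1 : ℕ) : ZMod p) := by
      rw [eq_neg_iff_add_eq_zero, ← Nat.cast_add, show t + 1 + (n + 1) = p by omega]
      simp
    rw [h2]
    have h4 : harm2 p (t + 1) = harm2 p t + (((t + 1 : ℕ) : ZMod p) ^ 2)⁻¹ :=
      Finset.sum_range_succ _ _
    have h5 : harm2 p (n + 1) = harm2 p n + (((n + 1 : ℕ) : ZMod p) ^ 2)⁻¹ :=
      Finset.sum_range_succ _ _
    rw [ht, h4, h3, neg_sq] at ih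
    rw [h5]
    linear_combination ih

lemma harm2_sub {r k : ℕ} (h : r ≤ k) :
    harm2 p k - harm2 p (k - r) = ∑ i ∈ Finset.range r, (((k : ZMod p) - i) ^ 2)⁻¹ := by
  induction r with
  | zero => simp
  | succ r ih =>
    obtain ⟨t, ht⟩ : ∃ t, k - r = t + 1 := ⟨k - r - 1, by omega⟩
    have ih := ih (by omega)
    have h4 : harm2 p (t + 1) = harm2 p t + (((t + 1 : ℕ) : ZMod p) ^ 2)⁻¹ :=
      Finset.sum_range_succ _ _
    rw [Finset.sum_range_succ, ← ih, ht, h4, show k - (r + 1) = t by omega, ← ht,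
      Nat.cast_sub (by omega)]
    ring

/-- Restricting to `[r, p - 1]` loses nothing when the summand vanishes below `r`. -/
lemma sum_Icc_eq_range (g : ℕ → ZMod p) {r : ℕ} (hg : ∀ k < r, g k = 0) :
    ∑ k ∈ Finset.Icc r (p - 1), g k = ∑ k ∈ Finset.range p, g k := by
  have hp1 := hp.out.one_lt
  refine Finset.sum_subset ?_ ?_
  · intro k hk
    simp only [Finset.mem_Icc, Finset.mem_range] at *
    omega
  · intro k hk hk'
    simp only [Finset.mem_Icc, Finset.mem_range] at *
    exact hg k (by omega)

open Polynomial in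
lemma sum_choose_pow {m r : ℕ} (hr : r < p) (hm : 0 < m) (h : m * r < p - 1) :
    ∑ k ∈ Finset.Icc r (p - 1), (k.choose r : ZMod p) ^ m = 0 := by
  have hf := pow_ne_zero m (factorial_cast_ne_zero (p := p) hr)
  apply (mul_eq_zero.1 ?_).resolve_left hf
  rw [sum_Icc_eq_range _ fun k hk => by simp [Nat.choose_eq_zero_of_lt hk, hm.ne'],
    Finset.mul_sum,
    ← sum_range_eval ((∏ i ∈ Finset.range r, (X - C (i : ZMod p))) ^ m) ?_]
  · refine Finset.sum_congr rfl fun k _ => ?_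
    rw [← mul_pow, cast_factorial_mul_choose, eval_pow, eval_prod]
    simp
  · rw [natDegree_pow, natDegree_finsetProd_X_sub_C_eq_card, Finset.card_range]
    exact h

open Polynomial in
lemma sum_choose_pow_div {m r i : ℕ} (hr : r < p) (hm : 2 < m) (h : m * r < p - 1) (hi : i < r) :
    ∑ k ∈ Finset.Icc r (p - 1), (k.choose r : ZMod p) ^ m * (((k : ZMod p) - i) ^ 2)⁻¹ = 0 := by
  have hf := pow_ne_zero m (factorial_cast_ne_zero (p := p) hr)
  apply (mul_eq_zero.1 ?_).resolve_left hf
  rw [sum_Icc_eq_range _ fun k hk => by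
    simp [Nat.choose_eq_zero_of_lt hk, show m ≠ 0 by omega], Finset.mul_sum]
  obtain ⟨n, rfl⟩ : ∃ n, m = n + 3 := ⟨m - 3, by omega⟩
  have him := Finset.mem_range.2 hi
  rw [← sum_range_eval ((∏ j ∈ (Finset.range r).erase i, (X - C (j : ZMod p))) ^ 2 *
      (∏ j ∈ Finset.range r, (X - C (j : ZMod p))) ^ (n + 1)) ?_]
  · refine Finset.sum_congr rfl fun k _ => ?_
    rw [← mul_assoc, ← mul_pow, cast_factorial_mul_choose, eval_mul, eval_pow, eval_prod,
      eval_pow, eval_prod]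
    simp only [eval_sub, eval_X, eval_C]
    rw [← Finset.mul_prod_erase _ _ him]
    -- If `k = i` in `ZMod p`, both sides vanish: the exponent `n + 1` is positive.
    by_cases hz : (k : ZMod p) - i = 0
    · simp [hz]
    · field_simp
      ring
  · refine lt_of_le_of_lt natDegree_mul_le ?_
    rw [natDegree_pow, natDegree_pow, natDegree_finsetProd_X_sub_C_eq_card,
      natDegree_finsetProd_X_sub_C_eq_card, Finset.card_range, Finset.card_erase_of_mem him,
      Finset.card_range]
    have : (n + 3) * r = (n + 1) * r + 2 * r := by ring
    omega

/-- The congruence in `ZMod p`, with `r = q - 1`. -/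
lemma two_mul_sum_eq_zero {m r : ℕ} (hm : 2 < m) (hpar : Even (r * m)) (h : m * (r + 1) < p) :
    2 * ∑ k ∈ Finset.Icc r (p - 1), (k.choose r : ZMod p) ^ m *
      ∑ j ∈ Finset.Icc (r + 1) k, ((j : ZMod p) ^ 2)⁻¹ = 0 := by
  have hmr : m * (r + 1) = m * r + m := by ring
  have hr : r < p := by nlinarith
  have hlt : m * r < p - 1 := by omega
  set S := ∑ k ∈ Finset.Icc r (p - 1), (k.choose r : ZMod p) ^ m *
      ∑ j ∈ Finset.Icc (r + 1) k, ((j : ZMod p) ^ 2)⁻¹ with hS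
  have h1 : S = ∑ k ∈ Finset.Icc r (p - 1),
      (k.choose r : ZMod p) ^ m * (harm2 p k - harm2 p r) :=
    Finset.sum_congr rfl fun k hk => by rw [sum_Icc_eq_harm2 (Finset.mem_Icc.1 hk).1]
  have h2 : S = ∑ k ∈ Finset.Icc r (p - 1),
      (k.choose r : ZMod p) ^ m * (harm2 p (p - 1) - harm2 p (k - r) - harm2 p r) := by
    rw [h1]
    refine Finset.sum_bij' (fun k _ => p - 1 + r - k) (fun k _ => p - 1 + r - k) ?_ ?_ ?_ ?_ ?_
    · intro k hk
      simp only [Finset.mem_Icc] at *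
      omega
    · intro k hk
      simp only [Finset.mem_Icc] at *
      omega
    · intro k hk
      simp only [Finset.mem_Icc] at *
      omega
    · intro k hk
      simp only [Finset.mem_Icc] at *
      omega
    · intro k hk
      simp only [Finset.mem_Icc] at hk
      rw [choose_reflect hr hk.2, mul_pow, ← pow_mul, hpar.neg_one_pow, one_mul,
        ← harm2_reflect (by omega)]
      congr 3
      omega
  have h3 : 2 * S = ∑ i ∈ Finset.range r, ∑ k ∈ Finset.Icc r (p - 1),
        (k.choose r : ZMod p) ^ m * (((k : ZMod p) - i) ^ 2)⁻¹ +
      (∑ k ∈ Finset.Icc r (p - 1), (k.choose r : ZMod p) ^ m) *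
        (harm2 p (p - 1) - 2 * harm2 p r) := by
    rw [two_mul]
    nth_rw 1 [h1]
    rw [h2, ← Finset.sum_add_distrib, Finset.sum_comm, Finset.sum_mul, ← Finset.sum_add_distrib]
    refine Finset.sum_congr rfl fun k hk => ?_
    rw [← Finset.mul_sum, ← harm2_sub (Finset.mem_Icc.1 hk).1]
    ring
  rw [h3, sum_choose_pow hr (by omega) hlt, zero_mul, add_zero]
  exact Finset.sum_eq_zero fun i hi =>
    sum_choose_pow_div hr hm hlt (Finset.mem_range.1 hi)

end

theorem stmt11 (m q : ℕ) (hm : 2 < m) (hq : 0 < q) (hmq : Even m ∨ Odd q)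
    (p : ℕ) (hp : p.Prime) (hpmq : m * q < p) :
    padicNorm p (2 * ∑ k ∈ Finset.Icc (q - 1) (p - 1),
        (k.choose (q - 1) : ℚ) ^ m * ∑ j ∈ Finset.Icc q k, 1 / (j : ℚ) ^ 2)
      ≤ (p : ℚ) ^ (-(1 : ℤ)) := by
  have : Fact p.Prime := ⟨hp⟩
  obtain ⟨r, rfl⟩ : ∃ r, q = r + 1 := ⟨q - 1, by omega⟩
  rw [Nat.add_sub_cancel]
  have hpar : Even (r * m) := by
    rcases hmq with h | h
    · exact h.mul_left r
    · rw [Nat.odd_add_one, Nat.not_odd_iff_even] at h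
      exact h.mul_right m
  set x : ℚ := 2 * ∑ k ∈ Finset.Icc r (p - 1),
        (k.choose r : ℚ) ^ m * ∑ j ∈ Finset.Icc (r + 1) k, 1 / (j : ℚ) ^ 2 with hx
  set d : ℕ := (p - 1).factorial with hd
  -- `d ^ 2 * x` as a natural number: `d / j` is an exact division for `1 ≤ j ≤ p - 1`.
  set N : ℕ := 2 * ∑ k ∈ Finset.Icc r (p - 1),
        k.choose r ^ m * ∑ j ∈ Finset.Icc (r + 1) k, (d / j) ^ 2 with hN
  have hp1 := hp.one_lt
  have hdiv : ∀ k ∈ Finset.Icc r (p - 1), ∀ j ∈ Finset.Icc (r + 1) k, d / j * j = d := by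
    intro k hk j hj
    simp only [Finset.mem_Icc] at hk hj
    exact Nat.div_mul_cancel (Nat.dvd_factorial (by omega) (by omega))
  have hNx : (N : ℚ) = (d : ℚ) ^ 2 * x := by
    rw [hN, hx, mul_left_comm]
    push_cast
    congr 1
    rw [Finset.mul_sum]
    refine Finset.sum_congr rfl fun k hk => ?_
    rw [mul_left_comm]
    congr 1
    rw [Finset.mul_sum]
    refine Finset.sum_congr rfl fun j hj => ?_
    have hj0 : (j : ℚ) ≠ 0 := by
      have := (Finset.mem_Icc.1 hj).1
      exact_mod_cast (by omega : j ≠ 0)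
    have e : ((d / j : ℕ) : ℚ) * j = d := by exact_mod_cast hdiv k hk j hj
    rw [← Nat.cast_pow, ← e]
    push_cast
    field_simp
  have hNp : (N : ZMod p) = 0 := by
    have key := two_mul_sum_eq_zero (p := p) hm hpar hpmq
    have : (N : ZMod p) = (d : ZMod p) ^ 2 * (2 * ∑ k ∈ Finset.Icc r (p - 1),
        (k.choose r : ZMod p) ^ m * ∑ j ∈ Finset.Icc (r + 1) k, ((j : ZMod p) ^ 2)⁻¹) := by
      rw [hN, mul_left_comm]
      push_cast
      congr 1
      rw [Finset.mul_sum]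
      refine Finset.sum_congr rfl fun k hk => ?_
      rw [mul_left_comm]
      congr 1
      rw [Finset.mul_sum]
      refine Finset.sum_congr rfl fun j hj => ?_
      have hj0 : (j : ZMod p) ≠ 0 := by
        rw [Ne, ZMod.natCast_eq_zero_iff]
        simp only [Finset.mem_Icc] at hk hj
        exact fun h => absurd (Nat.le_of_dvd (by omega) h) (by omega)
      have e : ((d / j : ℕ) : ZMod p) * j = d := by
        rw [← Nat.cast_mul, hdiv k hk j hj]
      rw [← e]
      field_simp
    rw [this, key, mul_zero]
  have hd1 : padicNorm p (d : ℚ) = 1 := by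
    rw [padicNorm.nat_eq_one_iff, hd, hp.dvd_factorial]
    omega
  have hnorm : padicNorm p x = padicNorm p (N : ℚ) := by
    rw [hNx, padicNorm.mul ((d : ℚ) ^ 2), pow_two, padicNorm.mul (d : ℚ), hd1, one_mul, one_mul]
  rw [hnorm]
  have := (padicNorm.dvd_iff_norm_le (p := p) (n := 1) (z := (N : ℤ))).1
    (by simpa using Int.natCast_dvd_natCast.2 ((ZMod.natCast_eq_zero_iff N p).1 hNp))
  simpa using this
end
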